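/- Free-space characterization for a 3-segment polyline against a segment: let p, a, b, q, u, v ∈ ℝ^d, let π be the polygonal curve with vertex sequence p, a, b, q (concatenation of the three segments), and let τ be the linearly parametrized segment from u to v. Then d_F(π, τ) ≤ 2Δ if and only if the following three conditions hold: (i) ‖p − u‖ ≤ 2Δ; (ii) ‖q − v‖ ≤ 2Δ; (iii) there exist λ, λ' ∈ [0,1] with λ ≤ λ' such that ‖a − ((1−λ)u + λv)‖ ≤ 2Δ and ‖b − ((1−λ')u + λ'v)‖ ≤ 2Δ. -/

import Mathlib

/-!
The Fréchet distance is symmetric, so the segment may be reparametrized instead of the polygonal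
curve. The parameters on the segment matched to the vertices form a weak subdivision
`0 = r 0 ≤ ⋯ ≤ r n = 1`. Conversely, interpolating such a subdivision linearly matches each edge
affinely with a piece of the segment, and on it the distance is convex, hence at most its values at
the vertices. This matching may fail to be strictly increasing, but mixing in a small multiple of
the identity repairs that at arbitrarily small cost. The infimum in the Fréchet distance need not be
attained; compactness of the set of weak subdivisions removes the resulting `ε`.
-/

open Set

noncomputable section

/-- Points in `ℝ^d`. -/
abbrev Pt (d : ℕ) : Type := EuclideanSpace ℝ (Fin d)

/-- A reparametrization: a continuous strictly increasing bijection of `[0,1]` onto itself. -/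
def IsReparam (γ : ℝ → ℝ) : Prop :=
  ContinuousOn γ (Icc 0 1) ∧ StrictMonoOn γ (Icc 0 1) ∧ γ '' Icc 0 1 = Icc 0 1

/-- The Fréchet distance `d_F(P,Q) = inf_γ sup_{t ∈ [0,1]} ‖P(γ(t)) - Q(t)‖`
(only the values of the curves on `[0,1]` are relevant). -/
def frechetDist {d : ℕ} (P Q : ℝ → Pt d) : ℝ :=
  ⨅ γ : {γ : ℝ → ℝ // IsReparam γ}, ⨆ s : Icc (0:ℝ) 1, ‖P (γ.1 s.1) - Q s.1‖

/-- The linearly parametrized line segment from `a` to `b`. -/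
def seg {d : ℕ} (a b : Pt d) : ℝ → Pt d := fun s => (1 - s) • a + s • b

/-- The subcurve `P[a,b]` of `P`, linearly reparametrized over `[0,1]`. -/
def subcurve {d : ℕ} (P : ℝ → Pt d) (a b : ℝ) : ℝ → Pt d := fun s => P (a + s * (b - a))

/-- The polygonal curve with vertex sequence `pts 0, …, pts n`, uniformly
parametrized over `[0,1]`. -/
def polyline {d n : ℕ} (pts : Fin (n + 1) → Pt d) : ℝ → Pt d := fun s =>
  if h : n = 0 then pts 0
  else
    let i : ℕ := min ⌊s * n⌋₊ (n - 1)
    have hi : i < n := lt_of_le_of_lt (min_le_right _ _) (by omega)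
    (1 - (s * n - i)) • pts ⟨i, hi.trans n.lt_succ_self⟩ +
      (s * n - i) • pts ⟨i + 1, Nat.succ_lt_succ hi⟩

/-- `f ∈ 𝕏^d_ℓ`: `f` is a polygonal curve with at most `ℓ` vertices. -/
def IsPolygonal {d : ℕ} (f : ℝ → Pt d) (ℓ : ℕ) : Prop :=
  ∃ n : ℕ, n + 1 ≤ ℓ ∧ ∃ pts : Fin (n + 1) → Pt d, f = polyline pts

/-- Concatenation of two curves (each parametrized over `[0,1]`). -/
def concat {d : ℕ} (f g : ℝ → Pt d) : ℝ → Pt d := fun s =>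
  if s ≤ 1 / 2 then f (2 * s) else g (2 * s - 1)

/-- `CostLE P m t C Δ` states that the clustering cost satisfies `φ(P,C) ≤ Δ`:
there is a family `I` of index pairs `(i,j)`, `1 ≤ i < j ≤ m`, with
`⋃_{(i,j) ∈ I} [t i, t j] = [0,1]`, such that every corresponding subcurve is
within Fréchet distance `Δ` of some center in `C`. -/
def CostLE {d : ℕ} (P : ℝ → Pt d) (m : ℕ) (t : ℕ → ℝ) (C : Set (ℝ → Pt d)) (Δ : ℝ) : Prop :=
  ∃ I : Set (ℕ × ℕ),
    (∀ q ∈ I, 1 ≤ q.1 ∧ q.1 < q.2 ∧ q.2 ≤ m) ∧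
    (⋃ q ∈ I, Icc (t q.1) (t q.2)) = Icc (0:ℝ) 1 ∧
    ∀ q ∈ I, ∃ c ∈ C, frechetDist (subcurve P (t q.1) (t q.2)) c ≤ Δ

/-- The set `r_Q` of the set system `R` (ground set `{1,…,m−1}`):
`r_Q = {z : ∃ i ≤ z < j, d_F(Q, P[t_i,t_j]) ≤ Δ}`. -/
def rSet {d : ℕ} (P : ℝ → Pt d) (m : ℕ) (t : ℕ → ℝ) (Δ : ℝ) (Q : ℝ → Pt d) : Set ℕ :=
  {z | 1 ≤ z ∧ z < m ∧ ∃ i j, 1 ≤ i ∧ i ≤ z ∧ z < j ∧ j ≤ m ∧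
    frechetDist Q (subcurve P (t i) (t j)) ≤ Δ}

section PiecewiseLinear

variable {E F : Type*} [AddCommGroup E] [Module ℝ E] [AddCommGroup F] [Module ℝ F] {n : ℕ}

/-- The piecewise linear interpolation of `x 0, …, x n` at the integer nodes `0, …, n`, constant to
the left of `0` and to the right of `n`. It is encoded as a sum of clamped increments rather than
by cases on the floor of `t`, so that continuity and monotonicity can be read off termwise. -/
def linInterp (x : Fin (n + 1) → E) (t : ℝ) : E :=
  x 0 + ∑ k : Fin n, max 0 (min 1 (t - k)) • (x k.succ - x k.castSucc)

lemma linInterp_of_nonpos (x : Fin (n + 1) → E) {t : ℝ} (ht : t ≤ 0) : linInterp x t = x 0 := by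
  have clamp_eq_zero (k : Fin n) : max 0 (min 1 (t - k)) = 0 :=
    max_eq_left ((min_le_right _ _).trans (by linarith [k.val.cast_nonneg (α := ℝ)]))
  simp only [linInterp, clamp_eq_zero, zero_smul, Finset.sum_const_zero, add_zero]

lemma linInterp_succ (x : Fin (n + 2) → E) (t : ℝ) :
    linInterp x t = linInterp (x ∘ Fin.castSucc) t +
      max 0 (min 1 (t - n)) • (x (Fin.last (n + 1)) - x (Fin.last n).castSucc) := by
  simp [linInterp, Fin.sum_univ_castSucc, add_assoc]

lemma linInterp_of_ge (x : Fin (n + 1) → E) {t : ℝ} (ht : n ≤ t) :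
    linInterp x t = x (Fin.last n) := by
  induction n with
  | zero => simp [linInterp]
  | succ n ih =>
    push_cast at ht
    have clamp_eq_one : max 0 (min 1 (t - n)) = 1 := by
      rw [min_eq_left (by linarith), max_eq_right zero_le_one]
    rw [linInterp_succ, ih _ (by linarith), clamp_eq_one, one_smul, Function.comp_apply,
      add_sub_cancel]

lemma linInterp_succ_of_le (x : Fin (n + 2) → E) {t : ℝ} (ht : t ≤ n) :
    linInterp x t = linInterp (x ∘ Fin.castSucc) t := by
  have clamp_eq_zero : max 0 (min 1 (t - n)) = 0 :=
    max_eq_left ((min_le_right _ _).trans (sub_nonpos.2 ht))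
  rw [linInterp_succ, clamp_eq_zero, zero_smul, add_zero]

lemma linInterp_succ_of_ge (x : Fin (n + 2) → E) {t : ℝ} (ht : n ≤ t) :
    linInterp x t =
      AffineMap.lineMap (x (Fin.last n).castSucc) (x (Fin.last (n + 1))) (min 1 (t - n)) := by
  rw [linInterp_succ, linInterp_of_ge _ ht, max_eq_right (le_min zero_le_one (sub_nonneg.2 ht)),
    AffineMap.lineMap_apply_module', add_comm, Function.comp_apply]

lemma linInterp_natCast_add (x : Fin (n + 1) → E) (i : Fin n) {θ : ℝ} (hθ : θ ∈ Icc (0 : ℝ) 1) :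
    linInterp x (i + θ) = AffineMap.lineMap (x i.castSucc) (x i.succ) θ := by
  induction n with
  | zero => exact i.elim0
  | succ n ih =>
    cases i using Fin.lastCases with
    | last => simp [linInterp_succ_of_ge, hθ.1, hθ.2]
    | cast i =>
      have : (i : ℝ) + 1 ≤ n := mod_cast i.is_lt
      rw [Fin.val_castSucc, linInterp_succ_of_le _ (by linarith [hθ.2]), ih]
      rfl

lemma linInterp_natCast (x : Fin (n + 1) → E) (i : Fin (n + 1)) : linInterp x i = x i := by
  cases i using Fin.lastCases with
  | last => exact linInterp_of_ge x le_rfl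
  | cast i => simpa using linInterp_natCast_add x i (left_mem_Icc.2 zero_le_one)

lemma linInterp_sub (x y : Fin (n + 1) → E) (t : ℝ) :
    linInterp (x - y) t = linInterp x t - linInterp y t := by
  simp only [linInterp, Pi.sub_apply, sub_sub_sub_comm, smul_sub, Finset.sum_sub_distrib]
  abel

lemma map_linInterp (f : E →ᵃ[ℝ] F) (x : Fin (n + 1) → E) (t : ℝ) :
    f (linInterp x t) = linInterp (f ∘ x) t := by
  have map_increment (k : Fin n) :
      f.linear (x k.succ - x k.castSucc) = f (x k.succ) - f (x k.castSucc) := f.linearMap_vsub _ _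
  rw [linInterp, add_comm, ← vadd_eq_add, f.map_vadd, vadd_eq_add, add_comm]
  simp only [map_sum, map_smul, map_increment, linInterp, Function.comp_apply]

lemma linInterp_mem_of_convex {s : Set E} (hs : Convex ℝ s) {x : Fin (n + 1) → E}
    (hx : ∀ i, x i ∈ s) (t : ℝ) : linInterp x t ∈ s := by
  induction n with
  | zero => simpa [linInterp] using hx 0
  | succ n ih =>
    rcases le_total t n with ht | ht
    · rw [linInterp_succ_of_le x ht]
      exact ih fun i => hx i.castSucc
    · rw [linInterp_succ_of_ge x ht]
      exact hs.lineMap_mem (hx _) (hx _)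
        ⟨le_min zero_le_one (sub_nonneg.2 ht), min_le_left _ _⟩

lemma monotone_linInterp {r : Fin (n + 1) → ℝ} (hr : Monotone r) : Monotone (linInterp r) := by
  intro s t hst
  unfold linInterp
  gcongr with k
  exact sub_nonneg.2 (hr (Fin.castSucc_le_succ k))

lemma continuous_linInterp [TopologicalSpace E] [ContinuousAdd E] [ContinuousSMul ℝ E]
    (x : Fin (n + 1) → E) : Continuous (linInterp x) := by
  unfold linInterp
  fun_prop

end PiecewiseLinear

lemma norm_linInterp_sub_le {E : Type*} [SeminormedAddCommGroup E] [NormedSpace ℝ E] {n : ℕ}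
    {x y : Fin (n + 1) → E} {C : ℝ} (h : ∀ i, ‖x i - y i‖ ≤ C) (t : ℝ) :
    ‖linInterp x t - linInterp y t‖ ≤ C := by
  rw [← linInterp_sub, ← mem_closedBall_zero_iff]
  exact linInterp_mem_of_convex (convex_closedBall 0 C)
    (fun i => mem_closedBall_zero_iff.2 (h i)) t

section Curves

variable {d n : ℕ}

lemma polyline_eq_linInterp (pts : Fin (n + 1) → Pt d) {s : ℝ} (hs : s ∈ Icc (0 : ℝ) 1) :
    polyline pts s = linInterp pts (s * n) := by
  rcases Nat.eq_zero_or_pos n with rfl | hn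
  · simp [polyline, linInterp]
  have hsn : 0 ≤ s * n := mul_nonneg hs.1 n.cast_nonneg
  let i : Fin n := ⟨min ⌊s * n⌋₊ (n - 1), by omega⟩
  have hθ : s * n - i ∈ Icc (0 : ℝ) 1 := by
    constructor
    · have : (i : ℝ) ≤ ⌊s * n⌋₊ := mod_cast min_le_left ⌊s * n⌋₊ (n - 1)
      linarith [Nat.floor_le hsn]
    · suffices s * n ≤ min (⌊s * n⌋₊ + 1 : ℝ) n by
        have hi : (i : ℕ) + 1 = min (⌊s * n⌋₊ + 1) n := by simp only [i]; omega
        have hi' : (i : ℝ) + 1 = min (⌊s * n⌋₊ + 1 : ℝ) n := mod_cast hi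
        linarith
      exact le_min (Nat.lt_floor_add_one _).le (mul_le_of_le_one_left n.cast_nonneg hs.2)
  have edge := linInterp_natCast_add pts i hθ
  rw [add_sub_cancel, AffineMap.lineMap_apply_module] at edge
  rw [edge, polyline, dif_neg hn.ne']
  rfl

lemma continuousOn_polyline (pts : Fin (n + 1) → Pt d) : ContinuousOn (polyline pts) (Icc 0 1) :=
  ((continuous_linInterp pts).comp (continuous_mul_const (n : ℝ))).continuousOn.congr
    fun _ hs => polyline_eq_linInterp pts hs

lemma natCast_div_mem_Icc (i : Fin (n + 1)) : (i / n : ℝ) ∈ Icc (0 : ℝ) 1 :=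
  ⟨by positivity, div_le_one_of_le₀ (mod_cast i.is_le) n.cast_nonneg⟩

lemma polyline_natCast_div (pts : Fin (n + 1) → Pt d) (i : Fin (n + 1)) :
    polyline pts (i / n) = pts i := by
  have hi : (n : ℝ) = 0 → (i : ℝ) = 0 := fun hn => by
    have := i.is_le
    rw [Nat.cast_eq_zero] at hn ⊢
    omega
  rw [polyline_eq_linInterp pts (natCast_div_mem_Icc i), div_mul_cancel_of_imp hi,
    linInterp_natCast]

lemma seg_eq_lineMap (u v : Pt d) : seg u v = AffineMap.lineMap u v :=
  funext fun s => (AffineMap.lineMap_apply_module u v s).symm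

lemma continuous_seg (u v : Pt d) : Continuous (seg u v) := by
  rw [seg_eq_lineMap]
  exact AffineMap.lineMap_continuous

lemma seg_linInterp (u v : Pt d) (r : Fin (n + 1) → ℝ) (t : ℝ) :
    seg u v (linInterp r t) = linInterp (seg u v ∘ r) t := by
  rw [seg_eq_lineMap, map_linInterp]

end Curves

lemma continuousOn_of_monotoneOn_of_image_eq {α β : Type*} [LinearOrder α] [TopologicalSpace α]
    [OrderTopology α] [LinearOrder β] [TopologicalSpace β] [OrderTopology β] [DenselyOrdered β]
    {f : α → β} {s : Set α} {t : Set β} [s.OrdConnected] [t.OrdConnected]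
    (hf : MonotoneOn f s) (himage : f '' s = t) : ContinuousOn f s := by
  have hmaps : MapsTo f s t := himage ▸ mapsTo_image f s
  have hmono : Monotone (hmaps.restrict f s t) := fun x y hxy => hf x.2 y.2 hxy
  have hsurj : Function.Surjective (hmaps.restrict f s t) :=
    hmaps.restrict_surjective_iff.2 himage.ge
  exact continuousOn_iff_continuous_domRestrict.2
    (continuous_subtype_val.comp (hmono.continuous_of_surjective hsurj))

namespace IsReparam

variable {γ : ℝ → ℝ}

protected lemma id : IsReparam id := ⟨continuousOn_id, strictMonoOn_id, image_id _⟩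

lemma of_strictMonoOn (hcont : ContinuousOn γ (Icc 0 1)) (hmono : StrictMonoOn γ (Icc 0 1))
    (h0 : γ 0 = 0) (h1 : γ 1 = 1) : IsReparam γ := by
  refine ⟨hcont, hmono, ?_⟩
  rw [hcont.image_Icc_of_monotoneOn zero_le_one hmono.monotoneOn, h0, h1]

lemma mapsTo (hγ : IsReparam γ) : MapsTo γ (Icc 0 1) (Icc 0 1) :=
  mapsTo_iff_image_subset.2 hγ.2.2.le

lemma surjOn (hγ : IsReparam γ) : SurjOn γ (Icc 0 1) (Icc 0 1) := hγ.2.2.ge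

lemma map_zero (hγ : IsReparam γ) : γ 0 = 0 := by
  have := hγ.2.1.monotoneOn.map_isLeast (isLeast_Icc zero_le_one)
  rw [hγ.2.2] at this
  exact this.unique (isLeast_Icc zero_le_one)

lemma map_one (hγ : IsReparam γ) : γ 1 = 1 := by
  have := hγ.2.1.monotoneOn.map_isGreatest (isGreatest_Icc zero_le_one)
  rw [hγ.2.2] at this
  exact this.unique (isGreatest_Icc zero_le_one)

lemma exists_invOn (hγ : IsReparam γ) :
    ∃ σ, IsReparam σ ∧ InvOn σ γ (Icc 0 1) (Icc 0 1) := by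
  have hbij : BijOn γ (Icc 0 1) (Icc 0 1) := ⟨hγ.mapsTo, hγ.2.1.injOn, hγ.surjOn⟩
  let σ := Function.invFunOn γ (Icc 0 1)
  have hinv : InvOn σ γ (Icc 0 1) (Icc 0 1) := hbij.invOn_invFunOn
  have hσ : BijOn σ (Icc 0 1) (Icc 0 1) := hbij.symm hinv.symm
  have hmono : StrictMonoOn σ (Icc 0 1) := fun s hs t ht hst => by
    rwa [← hγ.2.1.lt_iff_lt (hσ.mapsTo hs) (hσ.mapsTo ht), hinv.2 hs, hinv.2 ht]
  exact ⟨σ, ⟨continuousOn_of_monotoneOn_of_image_eq hmono.monotoneOn hσ.image_eq, hmono,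
    hσ.image_eq⟩, hinv⟩

end IsReparam

section FrechetDist

variable {d : ℕ} {P Q : ℝ → Pt d} {C : ℝ}

lemma bddBelow_range_iSup_norm_sub (P Q : ℝ → Pt d) :
    BddBelow (range fun γ : {γ : ℝ → ℝ // IsReparam γ} =>
      ⨆ s : Icc (0 : ℝ) 1, ‖P (γ.1 s.1) - Q s.1‖) :=
  ⟨0, forall_mem_range.2 fun _ => Real.iSup_nonneg fun _ => norm_nonneg _⟩

lemma frechetDist_le_of_isReparam {γ : ℝ → ℝ} (hγ : IsReparam γ)
    (h : ∀ s ∈ Icc (0 : ℝ) 1, ‖P (γ s) - Q s‖ ≤ C) : frechetDist P Q ≤ C :=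
  ciInf_le_of_le (bddBelow_range_iSup_norm_sub P Q) ⟨γ, hγ⟩ (ciSup_le fun s => h s s.2)

lemma exists_isReparam_of_frechetDist_lt (hP : ContinuousOn P (Icc 0 1))
    (hQ : ContinuousOn Q (Icc 0 1)) (h : frechetDist P Q < C) :
    ∃ γ, IsReparam γ ∧ ∀ s ∈ Icc (0 : ℝ) 1, ‖P (γ s) - Q s‖ ≤ C := by
  have : Nonempty {γ : ℝ → ℝ // IsReparam γ} := ⟨⟨id, .id⟩⟩
  obtain ⟨⟨γ, hγ⟩, hlt⟩ := exists_lt_of_ciInf_lt h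
  have hcont : ContinuousOn (fun s => ‖P (γ s) - Q s‖) (Icc 0 1) :=
    ((hP.comp hγ.1 hγ.mapsTo).sub hQ).norm
  -- Without this bound the supremum in `frechetDist` would be the junk value `0`.
  have hbdd : BddAbove (range fun s : Icc (0 : ℝ) 1 => ‖P (γ s) - Q s‖) := by
    simpa only [image_eq_range] using isCompact_Icc.bddAbove_image hcont
  exact ⟨γ, hγ, fun s hs => (le_ciSup hbdd ⟨s, hs⟩).trans hlt.le⟩

theorem frechetDist_comm (P Q : ℝ → Pt d) : frechetDist P Q = frechetDist Q P := by
  suffices key : ∀ P Q : ℝ → Pt d, frechetDist P Q ≤ frechetDist Q P from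
    le_antisymm (key P Q) (key Q P)
  intro P Q
  have : Nonempty {γ : ℝ → ℝ // IsReparam γ} := ⟨⟨id, .id⟩⟩
  refine le_ciInf fun ⟨γ, hγ⟩ => ?_
  obtain ⟨σ, hσ, hinv⟩ := hγ.exists_invOn
  refine ciInf_le_of_le (bddBelow_range_iSup_norm_sub P Q) ⟨σ, hσ⟩ (le_of_eq ?_)
  have hsurj : Function.Surjective (hγ.mapsTo.restrict γ (Icc 0 1) (Icc 0 1)) :=
    hγ.mapsTo.restrict_surjective_iff.2 hγ.surjOn
  rw [← hsurj.iSup_comp]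
  refine iSup_congr fun s => ?_
  simp only [MapsTo.val_restrict_apply, hinv.1 s.2, norm_sub_rev]

/-- Mixing `σ` with a small multiple of the identity makes it strictly increasing and moves `P ∘ σ`
arbitrarily little. -/
theorem frechetDist_le_of_monotoneOn {σ : ℝ → ℝ} (hP : ContinuousOn P (Icc 0 1))
    (hσ : ContinuousOn σ (Icc 0 1)) (hmono : MonotoneOn σ (Icc 0 1)) (h0 : σ 0 = 0) (h1 : σ 1 = 1)
    (h : ∀ s ∈ Icc (0 : ℝ) 1, ‖P (σ s) - Q s‖ ≤ C) : frechetDist P Q ≤ C := by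
  refine le_of_forall_pos_le_add fun ε hε => ?_
  obtain ⟨δ, hδ, hPδ⟩ :=
    Metric.uniformContinuousOn_iff_le.1 (isCompact_Icc.uniformContinuousOn_of_continuous hP) ε hε
  obtain ⟨η, hη, hη'⟩ : ∃ η, 0 < η ∧ η < min δ 1 := exists_between (lt_min hδ one_pos)
  obtain ⟨hηδ, hη1⟩ := lt_min_iff.1 hη'
  let τ : ℝ → ℝ := fun s => (1 - η) * σ s + η * s
  have hτ : IsReparam τ := by
    refine .of_strictMonoOn (by fun_prop) (fun s hs t ht hst => ?_) (by simp [τ, h0])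
      (by simp [τ, h1])
    exact add_lt_add_of_le_of_lt
      (mul_le_mul_of_nonneg_left (hmono hs ht hst.le) (sub_nonneg.2 hη1.le))
      (mul_lt_mul_of_pos_left hst hη)
  refine frechetDist_le_of_isReparam hτ fun s hs => ?_
  have hσs : σ s ∈ Icc (0 : ℝ) 1 :=
    ⟨h0 ▸ hmono (left_mem_Icc.2 zero_le_one) hs hs.1,
      h1 ▸ hmono hs (right_mem_Icc.2 zero_le_one) hs.2⟩
  have hclose : dist (τ s) (σ s) ≤ δ := by
    have hdiff : τ s - σ s = η * (s - σ s) := by ring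
    have hsub : |s - σ s| ≤ 1 :=
      abs_sub_le_iff.2 ⟨by linarith [hs.2, hσs.1], by linarith [hs.1, hσs.2]⟩
    rw [Real.dist_eq, hdiff, abs_mul, abs_of_pos hη]
    exact (mul_le_of_le_one_right hη.le hsub).trans hηδ.le
  calc ‖P (τ s) - Q s‖ ≤ ‖P (σ s) - Q s‖ + ‖P (τ s) - P (σ s)‖ := by
        rw [add_comm]; exact norm_sub_le_norm_sub_add_norm_sub _ _ _
    _ ≤ C + ε := add_le_add (h s hs) (dist_eq_norm (P (τ s)) _ ▸ hPδ _ (hτ.mapsTo hs) _ hσs hclose)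

end FrechetDist

/-- The weak subdivisions `0 = r 0 ≤ r 1 ≤ ⋯ ≤ r n = 1` of the unit interval: the candidate
parameters on a segment at which the vertices of a polygonal curve are matched. -/
def unitSubdivisions (n : ℕ) : Set (Fin (n + 1) → ℝ) :=
  {r | Monotone r ∧ r 0 = 0 ∧ r (Fin.last n) = 1}

section UnitSubdivisions

variable {n : ℕ}

lemma mem_Icc_of_mem_unitSubdivisions {r : Fin (n + 1) → ℝ} (hr : r ∈ unitSubdivisions n)
    (i : Fin (n + 1)) : r i ∈ Icc (0 : ℝ) 1 :=
  ⟨hr.2.1 ▸ hr.1 (Fin.zero_le i), hr.2.2 ▸ hr.1 (Fin.le_last i)⟩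

lemma isCompact_unitSubdivisions : IsCompact (unitSubdivisions n) := by
  have hclosed : IsClosed (unitSubdivisions n) :=
    isClosed_monotone.inter ((isClosed_eq (continuous_apply _) continuous_const).inter
      (isClosed_eq (continuous_apply _) continuous_const))
  exact (isCompact_univ_pi fun _ => isCompact_Icc).of_isClosed_subset hclosed
    fun _ hr i _ => mem_Icc_of_mem_unitSubdivisions hr i

lemma monotone_cons {α : Type*} [Preorder α] {r : Fin n → α} {a : α} (hr : Monotone r)
    (ha : ∀ i, a ≤ r i) : Monotone (Fin.cons a r : Fin (n + 1) → α) := by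
  intro i j hij
  cases i using Fin.cases <;> cases j using Fin.cases
  case zero.zero => exact le_rfl
  case zero.succ j => exact ha j
  case succ.zero i => exact absurd hij (Fin.succ_pos i).not_ge
  case succ.succ i j => exact hr (Fin.succ_le_succ_iff.1 hij)

lemma monotone_snoc {α : Type*} [Preorder α] {r : Fin n → α} {a : α} (hr : Monotone r)
    (ha : ∀ i, r i ≤ a) : Monotone (Fin.snoc r a : Fin (n + 1) → α) := by
  intro i j hij
  cases i using Fin.lastCases <;> cases j using Fin.lastCases
  case last.last => exact le_rfl
  case cast.last i => simpa using ha i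
  case last.cast j => exact absurd hij (Fin.castSucc_lt_last j).not_ge
  case cast.cast i j => simpa using hr (Fin.castSucc_le_castSucc_iff.1 hij)

lemma cons_snoc_mem_unitSubdivisions {r : Fin n → ℝ} (hr : Monotone r)
    (hIcc : ∀ i, r i ∈ Icc (0 : ℝ) 1) :
    (Fin.cons 0 (Fin.snoc r 1 : Fin (n + 1) → ℝ) : Fin (n + 2) → ℝ) ∈ unitSubdivisions (n + 1) := by
  have snoc_nonneg (j : Fin (n + 1)) : (0 : ℝ) ≤ (Fin.snoc r 1 : Fin (n + 1) → ℝ) j := by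
    cases j using Fin.lastCases with
    | last => simp
    | cast j => simpa using (hIcc j).1
  exact ⟨monotone_cons (monotone_snoc hr fun i => (hIcc i).2) snoc_nonneg, Fin.cons_zero ..,
    by rw [← Fin.succ_last, Fin.cons_succ, Fin.snoc_last]⟩

lemma exists_mem_unitSubdivisions_forall_mem_iff {A : Fin (n + 2) → Set ℝ} :
    (∃ r ∈ unitSubdivisions (n + 1), ∀ i, r i ∈ A i) ↔
      0 ∈ A 0 ∧ 1 ∈ A (Fin.last _) ∧
        ∃ r : Fin n → ℝ, (∀ i, r i ∈ Icc (0 : ℝ) 1) ∧ Monotone r ∧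
          ∀ i, r i ∈ A i.castSucc.succ := by
  constructor
  · rintro ⟨r, hr, hA⟩
    exact ⟨hr.2.1 ▸ hA 0, hr.2.2 ▸ hA (Fin.last _), fun i => r i.castSucc.succ,
      fun i => mem_Icc_of_mem_unitSubdivisions hr _, fun i j hij => hr.1 (by simpa using hij),
      fun i => hA _⟩
  · rintro ⟨h0, h1, r, hIcc, hr, hA⟩
    refine ⟨_, cons_snoc_mem_unitSubdivisions hr hIcc, fun i => ?_⟩
    cases i using Fin.cases with
    | zero => exact h0
    | succ i =>
      cases i using Fin.lastCases with
      | last => simpa using h1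
      | cast i => simpa using hA i

end UnitSubdivisions

lemma exists_mem_le_of_forall_pos {X : Type*} [TopologicalSpace X] {K : Set X} (hK : IsCompact K)
    {f : X → ℝ} (hf : ContinuousOn f K) {C : ℝ} (h : ∀ ε > 0, ∃ x ∈ K, f x ≤ C + ε) :
    ∃ x ∈ K, f x ≤ C := by
  obtain ⟨x₁, hx₁, -⟩ := h 1 one_pos
  obtain ⟨x, hx, hmin⟩ := hK.exists_isMinOn ⟨x₁, hx₁⟩ hf
  refine ⟨x, hx, le_of_forall_pos_le_add fun ε hε => ?_⟩
  obtain ⟨y, hy, hfy⟩ := h ε hε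
  exact (hmin hy).trans hfy

section PolylineSeg

variable {d n : ℕ} {pts : Fin (n + 1) → Pt d} {u v : Pt d} {C : ℝ}

lemma frechetDist_seg_polyline_le {r : Fin (n + 1) → ℝ} (hr : r ∈ unitSubdivisions n)
    (h : ∀ i, ‖seg u v (r i) - pts i‖ ≤ C) : frechetDist (seg u v) (polyline pts) ≤ C := by
  let σ : ℝ → ℝ := fun s => linInterp r (s * n)
  have hσ : Continuous σ := (continuous_linInterp r).comp (continuous_mul_const _)
  have hmono : Monotone σ :=
    (monotone_linInterp hr.1).comp (monotone_mul_right_of_nonneg n.cast_nonneg)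
  refine frechetDist_le_of_monotoneOn (continuous_seg u v).continuousOn hσ.continuousOn
    (hmono.monotoneOn _) ?_ ?_ fun s hs => ?_
  · exact (linInterp_of_nonpos r (zero_mul _).le).trans hr.2.1
  · exact (linInterp_of_ge r (one_mul _).ge).trans hr.2.2
  · rw [seg_linInterp, polyline_eq_linInterp pts hs]
    exact norm_linInterp_sub_le h _

lemma exists_mem_unitSubdivisions_of_frechetDist_lt (hn : n ≠ 0)
    (h : frechetDist (seg u v) (polyline pts) < C) :
    ∃ r ∈ unitSubdivisions n, ∀ i, ‖seg u v (r i) - pts i‖ ≤ C := by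
  obtain ⟨γ, hγ, hle⟩ := exists_isReparam_of_frechetDist_lt (continuous_seg u v).continuousOn
    (continuousOn_polyline pts) h
  refine ⟨fun i => γ (i / n), ⟨fun i j hij => ?_, ?_, ?_⟩, fun i => ?_⟩
  · exact hγ.2.1.monotoneOn (natCast_div_mem_Icc i) (natCast_div_mem_Icc j) (by gcongr; exact hij)
  · simpa using hγ.map_zero
  · simpa [hn] using hγ.map_one
  · simpa only [polyline_natCast_div] using hle _ (natCast_div_mem_Icc i)

theorem frechetDist_polyline_seg_le_iff (hn : n ≠ 0) :
    frechetDist (polyline pts) (seg u v) ≤ C ↔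
      ∃ r ∈ unitSubdivisions n, ∀ i, ‖pts i - seg u v (r i)‖ ≤ C := by
  simp only [frechetDist_comm (polyline pts), norm_sub_rev (pts _)]
  refine ⟨fun h => ?_, fun ⟨r, hr, h⟩ => frechetDist_seg_polyline_le hr h⟩
  -- In the sup norm on tuples, the conditions at all vertices become a single inequality.
  have hcont : Continuous fun r : Fin (n + 1) → ℝ => ‖fun i => seg u v (r i) - pts i‖ := by
    have := continuous_seg u v
    fun_prop
  simp only [← pi_norm_le_iff_of_nonempty]
  refine exists_mem_le_of_forall_pos isCompact_unitSubdivisions hcont.continuousOn fun ε hε => ?_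
  simpa only [pi_norm_le_iff_of_nonempty] using
    exists_mem_unitSubdivisions_of_frechetDist_lt hn (h.trans_lt (lt_add_of_pos_right C hε))

end PolylineSeg

theorem stmt10_general {d m : ℕ} (C : ℝ) (pts : Fin (m + 2) → Pt d) (u v : Pt d) :
    frechetDist (polyline pts) (seg u v) ≤ C ↔
      ‖pts 0 - u‖ ≤ C ∧ ‖pts (Fin.last _) - v‖ ≤ C ∧
      ∃ r : Fin m → ℝ, (∀ i, r i ∈ Icc (0 : ℝ) 1) ∧ Monotone r ∧
        ∀ i, ‖pts i.castSucc.succ - seg u v (r i)‖ ≤ C := by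
  rw [frechetDist_polyline_seg_le_iff m.succ_ne_zero]
  simpa [seg] using
    exists_mem_unitSubdivisions_forall_mem_iff (A := fun i => {s | ‖pts i - seg u v s‖ ≤ C})

/-- Free-space characterization for a 3-segment polyline against a
segment. -/
theorem stmt10 {d : ℕ} (Δ : ℝ) (hΔ : 0 < Δ) (p a b q u v : Pt d) :
    frechetDist (polyline (n := 3) ![p, a, b, q]) (seg u v) ≤ 2 * Δ ↔
      ‖p - u‖ ≤ 2 * Δ ∧ ‖q - v‖ ≤ 2 * Δ ∧
      ∃ lam lam' : ℝ, lam ∈ Icc (0:ℝ) 1 ∧ lam' ∈ Icc (0:ℝ) 1 ∧ lam ≤ lam' ∧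
        ‖a - ((1 - lam) • u + lam • v)‖ ≤ 2 * Δ ∧
        ‖b - ((1 - lam') • u + lam' • v)‖ ≤ 2 * Δ := by
  simpa [seg, Fin.exists_fin_succ_pi, Fin.forall_fin_two, Fin.monotone_iff_le_succ, and_assoc,
    -exists_and_left] using stmt10_general (2 * Δ) ![p, a, b, q] u v
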